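/- arXiv:1109.5086 — 3 statements merged into one kernel-verified Lean document; each statement's English description precedes it below -/
import Mathlib

section
/- For any integers L_0 ≥ 1 and l_0 > 2·l(d), there exists p < 1 such that for all n ≥ 0, P[D̄_{0,n}(B̃^p)] ≤ 2^{−2^n}. -/
open MeasureTheory
open scoped ENNReal

namespace RIQ

/-- The vertex set of the lattice `ℤ^d`. -/
abbrev V (d : ℕ) := Fin d → ℤ

/-- Nearest-neighbour adjacency on `ℤ^d` (`ℓ¹`-distance one). -/
def adj {d : ℕ} (x y : V d) : Prop := (∑ i, (x i - y i).natAbs) = 1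

/-- The `ℓ^∞` norm of a lattice point. -/
def normInf {d : ℕ} (x : V d) : ℕ := Finset.univ.sup fun i => (x i).natAbs

/-- `x` and `y` are connected by a nearest-neighbour path inside the set of sites `S`. -/
def SConn {d : ℕ} (S : Set (V d)) (x y : V d) : Prop :=
  ∃ (n : ℕ) (p : ℕ → V d), p 0 = x ∧ p n = y ∧ (∀ i ≤ n, p i ∈ S) ∧
    ∀ i < n, adj (p i) (p (i + 1))

/-- `x` lies in an infinite connected component of the set of sites `S`. -/
def SInf {d : ℕ} (S : Set (V d)) (x : V d) : Prop := {y | SConn S x y}.Infinite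

/-- `x` and `y` are connected by a nearest-neighbour path all of whose edges lie in the
edge set `E`. -/
def EConn {d : ℕ} (E : Set (Sym2 (V d))) (x y : V d) : Prop :=
  ∃ (n : ℕ) (p : ℕ → V d), p 0 = x ∧ p n = y ∧
    ∀ i < n, adj (p i) (p (i + 1)) ∧ s(p i, p (i + 1)) ∈ E

/-- `x` lies in an infinite connected component of the graph with edge set `E`. -/
def EInf {d : ℕ} (E : Set (Sym2 (V d))) (x : V d) : Prop := {y | EConn E x y}.Infinite

/-- The edges of `E` having both endpoints in the set of sites `B`. -/
def edgesIn {d : ℕ} (E : Set (Sym2 (V d))) (B : Set (V d)) : Set (Sym2 (V d)) :=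
  {e | e ∈ E ∧ ∀ v ∈ e, v ∈ B}

/-- Connectivity in the graph `E` restricted to the vertex set `B`. -/
def EConnOn {d : ℕ} (E : Set (Sym2 (V d))) (B : Set (V d)) (x y : V d) : Prop :=
  EConn (edgesIn E B) x y

/-- The connected component of `x` in the graph `E` restricted to the vertex set `B`. -/
def comp {d : ℕ} (E : Set (Sym2 (V d))) (B : Set (V d)) (x : V d) : Set (V d) :=
  {y | EConnOn E B x y}

/-- The unit step of a simple random walk encoded by a coordinate and a sign. -/
def stepVec (d : ℕ) (s : Fin d × Bool) : V d :=
  fun i => if i = s.1 then (if s.2 then 1 else -1) else 0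

/-- The position after `t` steps of the walk started at `x` with steps `s`. -/
def walkPos {d n : ℕ} (x : V d) (s : Fin n → Fin d × Bool) (t : ℕ) : V d :=
  x + ∑ m : Fin n, if (m : ℕ) < t then stepVec d (s m) else 0

/-- The probability that simple random walk started at `x` avoids `K` at times `1, …, n`. -/
noncomputable def escProbUpTo (d : ℕ) (K : Set (V d)) (x : V d) (n : ℕ) : ℝ :=
  (Nat.card {s : Fin n → Fin d × Bool // ∀ t : Fin n, walkPos x s ((t : ℕ) + 1) ∉ K} : ℝ) /
    ((2 * d : ℕ) : ℝ) ^ n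

/-- The probability that simple random walk started at `x` never returns to `K`
(escape probability); for `x ∈ K` this is the equilibrium measure `e_K(x)`. -/
noncomputable def esc (d : ℕ) (K : Set (V d)) (x : V d) : ℝ := ⨅ n : ℕ, escProbUpTo d K x n

/-- The (simple random walk) capacity of a finite set `K ⊆ ℤ^d`. -/
noncomputable def cap (d : ℕ) (K : Finset (V d)) : ℝ := ∑ x ∈ K, esc d (↑K) x

/-- The Green function `g(0)` of simple random walk on `ℤ^d` at the origin. -/
noncomputable def green0 (d : ℕ) : ℝ :=
  ∑' n : ℕ, (Nat.card {s : Fin n → Fin d × Bool // walkPos (0 : V d) s n = 0} : ℝ) /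
    ((2 * d : ℕ) : ℝ) ^ n

/-- The density `m(u) = P[0 ∈ I^u] = 1 - exp (-u / g(0))` of the interlacement at level `u`. -/
noncomputable def density (d : ℕ) (u : ℝ) : ℝ := 1 - Real.exp (-u / green0 d)

/-- A model of the random interlacements point process on `ℤ^d`, `d ≥ 3`:
a probability space carrying, for every level `u`, the random interlacement graph
`Ĩ^u ⊆ E^d` (the set of edges traversed by at least one trajectory of the interlacement
Poisson point process `Pois(u, W*)`).  The fields record the basic properties of this
family: edges of `Ĩ^u` are genuine lattice edges, the processes are coupled monotonically
in `u`, the law of the interlacement set `I^u` (the set of endpoints of edges of `Ĩ^u`)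
is characterised by `P[I^u ∩ K = ∅] = exp(-u cap(K))`, and the process is invariant and
ergodic under lattice translations. -/
structure InterlacementModel (d : ℕ) (Ω : Type) [MeasurableSpace Ω] where
  P : Measure Ω
  prob : IsProbabilityMeasure P
  Iedge : ℝ → Ω → Set (Sym2 (V d))
  edge_adj : ∀ (u : ℝ) (ω : Ω) (x y : V d), s(x, y) ∈ Iedge u ω → adj x y
  mono : ∀ u u' : ℝ, u ≤ u' → ∀ ω : Ω, Iedge u ω ⊆ Iedge u' ω
  law : ∀ u : ℝ, 0 < u → ∀ K : Finset (V d),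
    P {ω | ∀ x ∈ K, ∀ y : V d, s(x, y) ∉ Iedge u ω} =
      ENNReal.ofReal (Real.exp (-u * cap d K))
  shift : V d → Ω → Ω
  shift_pres : ∀ z : V d, MeasurePreserving (shift z) P P
  shift_eq : ∀ (z : V d) (u : ℝ) (ω : Ω),
    Iedge u (shift z ω) = Sym2.map (fun x => x + z) ⁻¹' Iedge u ω
  erg : ∀ z : V d, z ≠ 0 → Ergodic (shift z) P

/-- The random interlacement `I^u ⊆ ℤ^d`: the set of vertices incident to an edge of the
interlacement graph `Ĩ^u`. -/
def Isite {d : ℕ} {Ω : Type} [MeasurableSpace Ω] (M : InterlacementModel d Ω) (u : ℝ)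
    (ω : Ω) : Set (V d) := {x | ∃ y : V d, s(x, y) ∈ M.Iedge u ω}

/-- The vacant set `V^u = ℤ^d \ I^u`. -/
def Vsite {d : ℕ} {Ω : Type} [MeasurableSpace Ω] (M : InterlacementModel d Ω) (u : ℝ)
    (ω : Ω) : Set (V d) := (Isite M u ω)ᶜ

/-- `μ` is the Bernoulli product measure with parameter `p` on configurations `E → Bool`:
cylinder events have the i.i.d. Bernoulli probabilities. -/
def IsBernoulliProduct {E : Type*} (p : ℝ) (μ : Measure (E → Bool)) : Prop :=
  IsProbabilityMeasure μ ∧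
  ∀ (F : Finset E) (σ : E → Bool),
    μ {η | ∀ e ∈ F, η e = σ e} = ∏ e ∈ F, ENNReal.ofReal (if σ e then p else 1 - p)

/-- The box `x + [0, L)^d`. -/
def box {d : ℕ} (x : V d) (L : ℕ) : Set (V d) := {y | ∀ i, x i ≤ y i ∧ y i < x i + (L : ℤ)}

/-- The `ℓ^∞` ball `B(x, r)`. -/
def ballInf {d : ℕ} (x : V d) (r : ℕ) : Set (V d) := {y | normInf (y - x) ≤ r}

/-- The constant `l(d) = 30 · 4^d`. -/
def ld (d : ℕ) : ℕ := 30 * 4 ^ d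

/-- The length scales `L_n = l_0^n L_0`. -/
def Ln (l0 L0 n : ℕ) : ℕ := l0 ^ n * L0

/-- The renormalised lattice `G = L ℤ^d`. -/
def grid {d : ℕ} (L : ℕ) : Set (V d) := {x | ∀ i, (L : ℤ) ∣ x i}

/-- `Λ_{x,n} = G_{n-1} ∩ (x + [0, L_n)^d)`. -/
def lam {d : ℕ} (l0 L0 n : ℕ) (x : V d) : Set (V d) :=
  grid (Ln l0 L0 (n - 1)) ∩ box x (Ln l0 L0 n)

/-- The recursively defined cascading events `Ḡ_{x,n}` built from the seed events `G0`. -/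
def cascade (d l0 L0 : ℕ) (G0 : V d → Set (Set (Sym2 (V d)))) :
    ℕ → V d → Set (Set (Sym2 (V d)))
  | 0 => G0
  | n + 1 => fun x =>
      {G | ∃ x1 ∈ lam l0 L0 (n + 1) x, ∃ x2 ∈ lam l0 L0 (n + 1) x,
        Ln l0 L0 (n + 1) < ld d * normInf (x1 - x2) ∧
        G ∈ cascade d l0 L0 G0 n x1 ∧ G ∈ cascade d l0 L0 G0 n x2}

def IncreasingEv {d : ℕ} (A : Set (Set (Sym2 (V d)))) : Prop :=
  ∀ G G' : Set (Sym2 (V d)), G ⊆ G' → G ∈ A → G' ∈ A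
def DecreasingEv {d : ℕ} (A : Set (Set (Sym2 (V d)))) : Prop :=
  ∀ G G' : Set (Sym2 (V d)), G ⊆ G' → G' ∈ A → G ∈ A

/-- The event `A` depends only on the states of edges with both endpoints in `B`. -/
def DependsOn {d : ℕ} (A : Set (Set (Sym2 (V d)))) (B : Set (V d)) : Prop :=
  ∀ G G' : Set (Sym2 (V d)),
    (∀ e : Sym2 (V d), (∀ v ∈ e, v ∈ B) → (e ∈ G ↔ e ∈ G')) → (G ∈ A ↔ G' ∈ A)

/-- The box `x + [-L₀, 3 L₀)^d` carrying a seed event. -/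
def seedBox {d : ℕ} (x : V d) (L0 : ℕ) : Set (V d) :=
  {y | ∀ i, x i - (L0 : ℤ) ≤ y i ∧ y i < x i + 3 * (L0 : ℤ)}

/-- The sub-box `x + e L₀ + [0, L₀)^d` for `e ∈ {0,1}^d`. -/
def offsetBox {d : ℕ} (x : V d) (e : Fin d → Bool) (L0 : ℕ) : Set (V d) :=
  box (fun i => x i + if e i then (L0 : ℤ) else 0) L0

/-- The good increasing seed event `E_x^u` (with `mv = m(u)`): every sub-box
`x + e L₀ + [0, L₀)^d` contains a connected component with at least `(3/4) m(u) L₀^d`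
vertices, and all these components are connected within `x + [0, 2 L₀)^d`. -/
def eventE (d L0 : ℕ) (mv : ℝ) (x : V d) : Set (Set (Sym2 (V d))) :=
  {G | (∀ e : Fin d → Bool, ∃ v ∈ offsetBox x e L0,
          (3 / 4 : ℝ) * mv * (L0 : ℝ) ^ d ≤ (Nat.card ↥(comp G (offsetBox x e L0) v) : ℝ)) ∧
    ∀ (e e' : Fin d → Bool) (v w : V d), v ∈ offsetBox x e L0 → w ∈ offsetBox x e' L0 →
      (3 / 4 : ℝ) * mv * (L0 : ℝ) ^ d ≤ (Nat.card ↥(comp G (offsetBox x e L0) v) : ℝ) →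
      (3 / 4 : ℝ) * mv * (L0 : ℝ) ^ d ≤ (Nat.card ↥(comp G (offsetBox x e' L0) w) : ℝ) →
      EConnOn G (box x (2 * L0)) v w}

/-- The good decreasing seed event `F_x^u` (with `mv = m(u)`): every sub-box contains at
most `(5/4) m(u) L₀^d` non-isolated vertices. -/
def eventF (d L0 : ℕ) (mv : ℝ) (x : V d) : Set (Set (Sym2 (V d))) :=
  {G | ∀ e : Fin d → Bool,
    (Nat.card ↥{y | y ∈ offsetBox x e L0 ∧
        ∃ z ∈ offsetBox x e L0, adj y z ∧ s(y, z) ∈ G} : ℝ) ≤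
      (5 / 4 : ℝ) * mv * (L0 : ℝ) ^ d}

/-- The bad decreasing seed event `D̄_x`: some edge with both endpoints in
`x + [0, 2 L₀)^d` is absent from the configuration. -/
def eventDbar (d L0 : ℕ) (x : V d) : Set (Set (Sym2 (V d))) :=
  {G | ∃ y z : V d, y ∈ box x (2 * L0) ∧ z ∈ box x (2 * L0) ∧ adj y z ∧ s(y, z) ∉ G}

/-- A vertex `x ∈ G₀` is good for the pair of configurations (interlacement graph `GI`,
Bernoulli bond configuration `GB`): `E_x^u(GI)`, `F_x^u(GI)` hold and `D̄_x(GB)` fails. -/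
def goodVert (d L0 : ℕ) (mv : ℝ) (GI GB : Set (Sym2 (V d))) (x : V d) : Prop :=
  GI ∈ eventE d L0 mv x ∧ GI ∈ eventF d L0 mv x ∧ GB ∉ eventDbar d L0 x

/-- The points of `L ℤ^d` in a box of side `m * L` lie in a finite set of at most `m ^ d` points. -/
lemma exists_finset_grid_inter_box {d : ℕ} (L m : ℕ) (hL : 1 ≤ L) (x : V d) :
    ∃ S : Finset (V d), S.card ≤ m ^ d ∧ ∀ y ∈ grid L ∩ box x (m * L), y ∈ S := by
  classical
  refine ⟨Finset.univ.image fun (f : Fin d → Fin m) (i : Fin d) =>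
    (L : ℤ) * (-((-x i) / (L : ℤ)) + ((f i : ℕ) : ℤ)), ?_, ?_⟩
  · exact Finset.card_image_le.trans (by simp)
  · rintro y ⟨hy, hb⟩
    have hL' : (0 : ℤ) < L := by exact_mod_cast hL
    choose k hk using hy
    have hlow (i : Fin d) : 0 ≤ k i + (-x i) / (L : ℤ) := by
      have h1 : -k i ≤ (-x i) / (L : ℤ) := by
        rw [Int.le_ediv_iff_mul_le hL']
        have := (hb i).1
        rw [hk i] at this
        linarith
      linarith
    have hupp (i : Fin d) : k i + (-x i) / (L : ℤ) < m := by
      have h1 : (-x i) / (L : ℤ) < m - k i := by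
        rw [Int.ediv_lt_iff_lt_mul hL']
        have := (hb i).2
        rw [hk i] at this
        push_cast at this
        linarith
      linarith
    refine Finset.mem_image.2 ⟨fun i => ⟨(k i + (-x i) / (L : ℤ)).toNat, ?_⟩,
      Finset.mem_univ _, ?_⟩
    · have h1 := hlow i
      have h2 := hupp i
      omega
    · funext i
      rw [hk i]
      simp only [Int.toNat_of_nonneg (hlow i)]
      ring

lemma lt_of_mem_box_of_mem_box {d L : ℕ} {x₁ x₂ v : V d} (hL : 1 ≤ L)
    (h₁ : v ∈ box x₁ L) (h₂ : v ∈ box x₂ L) : normInf (x₁ - x₂) < L := by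
  refine (Finset.sup_lt_iff (Nat.lt_of_succ_le hL)).2 fun i _ => ?_
  have := h₁ i
  have := h₂ i
  simp only [Pi.sub_apply]
  omega

/-- Every configuration in `D̄_{x,n}` misses one of at most `K ^ (2 ^ n - 1) * M ^ (2 ^ n)` sets
of `2 ^ n` edges of the box `x + [0, 2 L_n)^d`, where `K = l₀ ^ (2 d)` bounds the number of pairs of
points of `Λ_{x,n}` and `M = (2 L₀) ^ (2 d)` that of pairs of points of a seed box. -/
lemma exists_missing_edges_of_mem_cascade {d L0 l0 : ℕ} (hL0 : 1 ≤ L0) (hl0 : 2 * ld d < l0)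
    (n : ℕ) (x : V d) :
    ∃ W : Finset (Finset (Sym2 (V d))),
      W.card ≤ ((l0 ^ d) ^ 2) ^ (2 ^ n - 1) * (((2 * L0) ^ d) ^ 2) ^ 2 ^ n ∧
      (∀ F ∈ W, F.card = 2 ^ n ∧ ∀ e ∈ F, ∀ v ∈ e, v ∈ box x (2 * Ln l0 L0 n)) ∧
      ∀ G ∈ cascade d l0 L0 (eventDbar d L0) n x, ∃ F ∈ W, ∀ e ∈ F, e ∉ G := by
  classical
  have hld : 30 ≤ ld d := by
    have : 1 ≤ 4 ^ d := Nat.one_le_pow _ _ (by norm_num)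
    unfold ld
    omega
  have hLn (n : ℕ) : 1 ≤ Ln l0 L0 n :=
    Nat.mul_pos (pow_pos (by omega) n) hL0
  induction n generalizing x with
  | zero =>
    obtain ⟨S, hScard, hS⟩ := exists_finset_grid_inter_box 1 (2 * L0) le_rfl x
    have hS' : ∀ y ∈ box x (2 * L0), y ∈ S := fun y hy =>
      hS y ⟨fun i => by simp, by simpa using hy⟩
    refine ⟨((S ×ˢ S).filter fun q => q.1 ∈ box x (2 * L0) ∧ q.2 ∈ box x (2 * L0)).image
      fun q => {s(q.1, q.2)}, ?_, ?_, ?_⟩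
    · calc _ ≤ (S ×ˢ S).card := Finset.card_image_le.trans (Finset.card_filter_le _ _)
        _ = S.card ^ 2 := by rw [Finset.card_product, sq]
        _ ≤ ((2 * L0) ^ d) ^ 2 := Nat.pow_le_pow_left hScard 2
        _ = _ := by simp
    · intro F hF
      obtain ⟨q, hq, rfl⟩ := Finset.mem_image.1 hF
      obtain ⟨-, h1, h2⟩ := Finset.mem_filter.1 hq
      refine ⟨by simp, fun e he v hv => ?_⟩
      rw [Finset.mem_singleton.1 he, Sym2.mem_iff] at hv
      rcases hv with rfl | rfl <;> simpa [Ln]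
    · rintro G ⟨y, z, hy, hz, -, hG⟩
      refine ⟨{s(y, z)}, Finset.mem_image.2 ⟨(y, z), ?_, rfl⟩, by simpa using hG⟩
      exact Finset.mem_filter.2 ⟨Finset.mk_mem_product (hS' y hy) (hS' z hz), hy, hz⟩
  | succ n ih =>
    choose W hWcard hWF hWG using ih
    have hsucc : Ln l0 L0 (n + 1) = l0 * Ln l0 L0 n := by
      simp only [Ln, pow_succ]
      ring
    obtain ⟨S, hScard, hS⟩ := exists_finset_grid_inter_box (Ln l0 L0 n) l0 (hLn n) x
    have hS' : ∀ y ∈ lam l0 L0 (n + 1) x, y ∈ S := fun y hy =>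
      hS y (by simpa [lam, hsucc] using hy)
    set T := (S ×ˢ S).filter fun q => q.1 ∈ lam l0 L0 (n + 1) x ∧ q.2 ∈ lam l0 L0 (n + 1) x ∧
      Ln l0 L0 (n + 1) < ld d * normInf (q.1 - q.2)
    refine ⟨T.biUnion fun q => Finset.image₂ (· ∪ ·) (W q.1) (W q.2), ?_, ?_, ?_⟩
    · refine (Finset.card_biUnion_le_card_mul _ _ _ fun q _ =>
        (Finset.card_image₂_le _ _ _).trans (Nat.mul_le_mul (hWcard q.1) (hWcard q.2))).trans ?_
      have hTcard : T.card ≤ (l0 ^ d) ^ 2 := by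
        calc _ ≤ (S ×ˢ S).card := Finset.card_filter_le _ _
          _ = S.card ^ 2 := by rw [Finset.card_product, sq]
          _ ≤ _ := Nat.pow_le_pow_left hScard 2
      refine (Nat.mul_le_mul_right _ hTcard).trans (le_of_eq ?_)
      have h2 : 1 ≤ 2 ^ n := Nat.one_le_two_pow
      obtain ⟨k, hk⟩ := Nat.exists_eq_add_of_le h2
      have h3 : 2 ^ (n + 1) = 1 + (1 + 2 * k) := by
        rw [pow_succ, hk]
        ring
      rw [h3, hk]
      simp only [Nat.add_sub_cancel_left]
      generalize (l0 ^ d) ^ 2 = K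
      generalize ((2 * L0) ^ d) ^ 2 = M
      ring
    · intro F hF
      obtain ⟨⟨x₁, x₂⟩, hq, hF⟩ := Finset.mem_biUnion.1 hF
      obtain ⟨F₁, hF₁, F₂, hF₂, rfl⟩ := Finset.mem_image₂.1 hF
      obtain ⟨-, h₁, h₂, hsep⟩ := Finset.mem_filter.1 hq
      obtain ⟨hc₁, hb₁⟩ := hWF _ _ hF₁
      obtain ⟨hc₂, hb₂⟩ := hWF _ _ hF₂
      have hsub : ∀ y ∈ lam l0 L0 (n + 1) x, ∀ v ∈ box y (2 * Ln l0 L0 n),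
          v ∈ box x (2 * Ln l0 L0 (n + 1)) := by
        intro y hy v hv i
        have h1 := hy.2 i
        have h2 := hv i
        have h3 : 2 * Ln l0 L0 n ≤ Ln l0 L0 (n + 1) := by
          rw [hsucc]
          exact Nat.mul_le_mul_right _ (by omega)
        omega
      have hdisj : Disjoint F₁ F₂ := by
        refine Finset.disjoint_left.2 fun e he₁ he₂ => ?_
        have hlt := lt_of_mem_box_of_mem_box (by have := hLn n; omega)
          (hb₁ e he₁ _ e.out_fst_mem) (hb₂ e he₂ _ e.out_fst_mem)
        have hle : ld d * normInf (x₁ - x₂) ≤ l0 * Ln l0 L0 n :=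
          calc _ ≤ ld d * (2 * Ln l0 L0 n) := Nat.mul_le_mul_left _ hlt.le
            _ = 2 * ld d * Ln l0 L0 n := by ring
            _ ≤ _ := Nat.mul_le_mul_right _ hl0.le
        simp only [hsucc] at hsep
        omega
      refine ⟨?_, fun e he v hv => ?_⟩
      · rw [Finset.card_union_of_disjoint hdisj, hc₁, hc₂, pow_succ]
        ring
      · rcases Finset.mem_union.1 he with he | he
        · exact hsub _ h₁ _ (hb₁ e he v hv)
        · exact hsub _ h₂ _ (hb₂ e he v hv)
    · rintro G ⟨x₁, h₁, x₂, h₂, hsep, hG₁, hG₂⟩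
      obtain ⟨F₁, hF₁, hm₁⟩ := hWG _ G hG₁
      obtain ⟨F₂, hF₂, hm₂⟩ := hWG _ G hG₂
      refine ⟨F₁ ∪ F₂, Finset.mem_biUnion.2 ⟨(x₁, x₂), ?_, Finset.mem_image₂_of_mem hF₁ hF₂⟩, ?_⟩
      · exact Finset.mem_filter.2
          ⟨Finset.mk_mem_product (hS' _ h₁) (hS' _ h₂), h₁, h₂, hsep⟩
      · intro e he
        rcases Finset.mem_union.1 he with he | he
        exacts [hm₁ e he, hm₂ e he]

/-- **Lemma (decay of the cascading Bernoulli bad events `D̄_{0,n}`).** For any integers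
`L₀ ≥ 1` and `l₀ > 2 l(d)` there is `p < 1` such that
`P[D̄_{0,n}(B̃^p)] ≤ 2^{-2^n}` for all `n ≥ 0`. -/
theorem cascade_eventDbar_decay (d : ℕ) (hd : 2 ≤ d) (L0 l0 : ℕ)
    (hL0 : 1 ≤ L0) (hl0 : 2 * ld d < l0) :
    ∃ p : ℝ, 0 < p ∧ p < 1 ∧
      ∀ μ : Measure (Sym2 (V d) → Bool), IsBernoulliProduct p μ →
        ∀ n : ℕ,
          μ {η | {e | η e = true} ∈ cascade d l0 L0 (eventDbar d L0) n 0} ≤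
            (1 / 2 : ℝ≥0∞) ^ 2 ^ n := by
  set N : ℕ := (l0 ^ d) ^ 2 * ((2 * L0) ^ d) ^ 2 with hN
  have hK : 1 ≤ (l0 ^ d) ^ 2 := Nat.one_le_iff_ne_zero.2 (by
    have : l0 ≠ 0 := by omega
    positivity)
  have hN1 : 1 ≤ N := Nat.one_le_iff_ne_zero.2 (by
    have : l0 ≠ 0 := by omega
    positivity)
  have hNR : (1 : ℝ) ≤ N := by exact_mod_cast hN1
  have hq0 : 0 < 1 / (2 * (N : ℝ)) := by positivity
  have hq1 : 1 / (2 * (N : ℝ)) < 1 := by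
    rw [div_lt_one (by positivity)]
    linarith
  refine ⟨1 - 1 / (2 * (N : ℝ)), by linarith, by linarith, fun μ hμ n => ?_⟩
  obtain ⟨W, hWcard, hWF, hWG⟩ :=
    exists_missing_edges_of_mem_cascade hL0 hl0 n (0 : V d)
  have hcard : W.card ≤ N ^ 2 ^ n := by
    refine hWcard.trans ?_
    rw [hN, mul_pow ((l0 ^ d) ^ 2)]
    exact Nat.mul_le_mul_right _ (Nat.pow_le_pow_right hK (Nat.sub_le _ _))
  have hmass : (N : ℝ≥0∞) * ENNReal.ofReal (1 / (2 * (N : ℝ))) = 1 / 2 := by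
    rw [← ENNReal.ofReal_natCast, ← ENNReal.ofReal_mul (by positivity),
      show (N : ℝ) * (1 / (2 * (N : ℝ))) = 1 / 2 by field_simp,
      ENNReal.ofReal_div_of_pos (by norm_num)]
    simp
  calc μ {η | {e | η e = true} ∈ cascade d l0 L0 (eventDbar d L0) n 0}
      ≤ μ (⋃ F ∈ W, {η | ∀ e ∈ F, η e = false}) := by
        refine measure_mono fun η hη => ?_
        obtain ⟨F, hF, hm⟩ := hWG _ hη
        exact Set.mem_biUnion hF fun e he => by simpa using hm e he
    _ ≤ ∑ F ∈ W, μ {η | ∀ e ∈ F, η e = false} := measure_biUnion_finset_le _ _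
    _ = ∑ F ∈ W, ENNReal.ofReal (1 / (2 * (N : ℝ))) ^ 2 ^ n := by
        refine Finset.sum_congr rfl fun F hF => ?_
        rw [hμ.2 F fun _ => false]
        simp [(hWF F hF).1]
    _ = W.card * ENNReal.ofReal (1 / (2 * (N : ℝ))) ^ 2 ^ n := by simp
    _ ≤ (N : ℝ≥0∞) ^ 2 ^ n * ENNReal.ofReal (1 / (2 * (N : ℝ))) ^ 2 ^ n := by
        gcongr
        exact_mod_cast hcard
    _ = (1 / 2 : ℝ≥0∞) ^ 2 ^ n := by rw [← mul_pow, hmass]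

end RIQ
end

section
/- Let x and y be nearest-neighbors in G_0 = L_0 Z^d (i.e., |x−y|_1 = L_0), and assume both are good. Then (a) each of the graphs (Ĩ^u ∩ B̃^p) ∩ (z + [0,L_0)^d), z ∈ {x,y}, contains a unique connected component C_z with at least (3/4)·m(u)·L_0^d vertices, and (b) C_x and C_y are connected within the graph (Ĩ^u ∩ B̃^p) ∩ ((x+[0,2L_0)^d) ∪ (y+[0,2L_0)^d)). In particular, if there is an infinite nearest-neighbor path π = (x_1, x_2, …) of good vertices in G_0, then the set ∪_{i≥1} (x_i + [0,2L_0)^d) contains an infinite nearest-neighbor path of Ĩ^u ∩ B̃^p. -/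
open MeasureTheory
open scoped ENNReal

namespace RIQ

/-- The nearest-neighbour graph on `ℤ^d` with edge set `E`. -/
def latticeGraph {d : ℕ} (E : Set (Sym2 (V d))) : SimpleGraph (V d) where
  Adj x y := adj x y ∧ s(x, y) ∈ E
  symm := ⟨fun x y h => ⟨by
    have := h.1
    unfold adj at this ⊢
    rw [← this]
    exact Finset.sum_congr rfl fun i _ => by omega, by rw [Sym2.eq_swap]; exact h.2⟩⟩
  loopless := ⟨fun x h => by simpa [adj] using h.1⟩

lemma econn_iff_reachable {d : ℕ} {E : Set (Sym2 (V d))} {x y : V d} :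
    EConn E x y ↔ (latticeGraph E).Reachable x y := by
  constructor
  · rintro ⟨n, p, rfl, rfl, h⟩
    induction n with
    | zero => exact .refl _
    | succ n ih =>
      exact (ih fun i hi => h i (by omega)).trans
        (SimpleGraph.Adj.reachable (G := latticeGraph E) (h n (by omega)))
  · rintro ⟨p⟩
    exact ⟨p.length, p.getVert, by simp, by simp, fun i hi => p.adj_getVert_succ hi⟩

lemma mem_comp_iff {d : ℕ} {E : Set (Sym2 (V d))} {B : Set (V d)} {x y : V d} :
    y ∈ comp E B x ↔ (latticeGraph (edgesIn E B)).Reachable x y :=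
  econn_iff_reachable

lemma latticeGraph_mono {d : ℕ} {E E' : Set (Sym2 (V d))} (h : E ⊆ E') :
    latticeGraph E ≤ latticeGraph E' := fun _ _ hab => ⟨hab.1, h hab.2⟩

lemma edgesIn_mono {d : ℕ} (E : Set (Sym2 (V d))) {B B' : Set (V d)} (h : B ⊆ B') :
    edgesIn E B ⊆ edgesIn E B' := fun _ he => ⟨he.1, fun v hv => h (he.2 v hv)⟩

lemma exists_adj_of_reachable_of_ne {W : Type*} {G : SimpleGraph W} {x y : W}
    (h : G.Reachable x y) (hne : x ≠ y) : ∃ a, G.Adj x a := by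
  obtain ⟨p⟩ := h
  cases p with
  | nil => exact absurd rfl hne
  | cons h _ => exact ⟨_, h⟩

lemma natAbs_sub_le_one_of_adj {d : ℕ} {x y : V d} (h : adj x y) (i : Fin d) :
    (x i - y i).natAbs ≤ 1 :=
  h ▸ Finset.single_le_sum (f := fun i => (x i - y i).natAbs) (fun _ _ => Nat.zero_le _)
    (Finset.mem_univ i)

lemma finite_setOf_adj {d : ℕ} (x : V d) : {y | adj x y}.Finite := by
  refine (Set.finite_Icc (x - 1) (x + 1)).subset fun y hy => ?_
  have h := natAbs_sub_le_one_of_adj hy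
  refine ⟨fun i => ?_, fun i => ?_⟩ <;> have := h i <;> simp <;> omega

lemma finite_box {d : ℕ} (x : V d) (L : ℕ) : (box x L).Finite := by
  refine (Set.finite_Icc x (fun i => x i + L)).subset fun y hy => ?_
  exact ⟨fun i => (hy i).1, fun i => (hy i).2.le⟩

lemma box_mono {d : ℕ} (x : V d) {L L' : ℕ} (h : L ≤ L') : box x L ⊆ box x L' :=
  fun y hy i => ⟨(hy i).1, by have := (hy i).2; omega⟩

lemma offsetBox_false {d : ℕ} (x : V d) (L : ℕ) :
    offsetBox x (fun _ => false) L = box x L := by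
  simp [offsetBox]

lemma mem_of_edgesIn_adj {d : ℕ} {E : Set (Sym2 (V d))} {B : Set (V d)} {x y : V d}
    (h : (latticeGraph (edgesIn E B)).Adj x y) : x ∈ B ∧ y ∈ B :=
  ⟨h.2.2 x (by simp), h.2.2 y (by simp)⟩

lemma comp_subset {d : ℕ} {E : Set (Sym2 (V d))} {B : Set (V d)} {x : V d} (hx : x ∈ B) :
    comp E B x ⊆ B := by
  intro y hy
  rw [mem_comp_iff] at hy
  by_cases hne : y = x
  · exact hne ▸ hx
  · obtain ⟨a, ha⟩ := exists_adj_of_reachable_of_ne hy.symm hne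
    exact (mem_of_edgesIn_adj ha).1

lemma comp_eq_of_mem {d : ℕ} {E : Set (Sym2 (V d))} {B : Set (V d)} {x y z : V d}
    (hx : z ∈ comp E B x) (hy : z ∈ comp E B y) : comp E B x = comp E B y := by
  rw [mem_comp_iff] at hx hy
  have hxy := hx.trans hy.symm
  ext w
  rw [mem_comp_iff, mem_comp_iff]
  exact ⟨hxy.symm.trans, hxy.trans⟩

lemma one_le_card_comp {d L : ℕ} {E : Set (Sym2 (V d))} {x v : V d} (hv : v ∈ box x L) :
    1 ≤ Nat.card ↥(comp E (box x L) v) := by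
  have : Finite ↥(comp E (box x L) v) := (finite_box x L).subset (comp_subset hv)
  have : Nonempty ↥(comp E (box x L) v) := ⟨v, mem_comp_iff.2 (.refl _)⟩
  exact Nat.card_pos

/-- The vertices of `B` having a `G`-neighbour in `B`. -/
def nonIsolated {d : ℕ} (G : Set (Sym2 (V d))) (B : Set (V d)) : Set (V d) :=
  {y | y ∈ B ∧ ∃ z ∈ B, adj y z ∧ s(y, z) ∈ G}

lemma nonIsolated_of_adj {d : ℕ} {G : Set (Sym2 (V d))} {B : Set (V d)} {x y : V d}
    (h : (latticeGraph (edgesIn G B)).Adj x y) : x ∈ nonIsolated G B :=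
  ⟨(mem_of_edgesIn_adj h).1, y, (mem_of_edgesIn_adj h).2, h.1, h.2.1⟩

lemma card_nonIsolated_le {d L : ℕ} {mv : ℝ} {z : V d} {G : Set (Sym2 (V d))}
    (hF : G ∈ eventF d L mv z) :
    ((nonIsolated G (box z L)).ncard : ℝ) ≤ 5 / 4 * mv * (L : ℝ) ^ d := by
  have := hF fun _ => false
  rwa [offsetBox_false] at this

lemma comp_subset_nonIsolated {d L : ℕ} {G : Set (Sym2 (V d))} {z v : V d}
    (h : 1 < (comp G (box z L) v).ncard) :
    comp G (box z L) v ⊆ nonIsolated G (box z L) := by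
  intro y hy
  obtain ⟨w, hw, hne⟩ := Set.exists_ne_of_one_lt_ncard h y
  rw [mem_comp_iff] at hy hw
  obtain ⟨a, ha⟩ := exists_adj_of_reachable_of_ne (hy.symm.trans hw) hne.symm
  exact nonIsolated_of_adj ha

/-- If isolated vertices count as large components, then a box of side at least two cannot
satisfy both seed events. -/
lemma one_lt_threshold {d L : ℕ} (hd : 0 < d) (hL : 2 ≤ L) {mv : ℝ} {z : V d}
    {G : Set (Sym2 (V d))} (hE : G ∈ eventE d L mv z) (hF : G ∈ eventF d L mv z) :
    1 < (3 / 4 : ℝ) * mv * (L : ℝ) ^ d := by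
  by_contra! hthr
  have hlarge : ∀ v ∈ box z L,
      (3 / 4 : ℝ) * mv * (L : ℝ) ^ d ≤ (Nat.card ↥(comp G (box z L) v) : ℝ) := fun v hv =>
    hthr.trans (by exact_mod_cast one_le_card_comp hv)
  have hz : z ∈ box z L := fun i => ⟨le_rfl, by omega⟩
  have hw : (fun i => z i + 1) ∈ box z L := fun i => ⟨by simp, by simp; omega⟩
  have hconn := hE.2 (fun _ => false) (fun _ => false) z (fun i => z i + 1)
  simp only [offsetBox_false] at hconn
  have hreach := econn_iff_reachable.1 (hconn hz hw (hlarge _ hz) (hlarge _ hw))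
  obtain ⟨a, ha⟩ := exists_adj_of_reachable_of_ne hreach fun h => by
    have := congrFun h ⟨0, hd⟩
    simp at this
  have hab : a ∈ box z L := fun i => by
    have h1 := (mem_of_edgesIn_adj ha).2 i
    have h2 := natAbs_sub_le_one_of_adj ha.1 i
    omega
  have hadj : (latticeGraph (edgesIn G (box z L))).Adj z a :=
    ⟨ha.1, ha.2.1, by simpa using ⟨hz, hab⟩⟩
  have hpair : ({z, a} : Set (V d)) ⊆ nonIsolated G (box z L) := by
    rintro v (rfl | rfl)
    · exact nonIsolated_of_adj hadj
    · exact nonIsolated_of_adj hadj.symm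
  have hcard := Set.ncard_le_ncard hpair ((finite_box z L).subset fun _ h => h.1)
  rw [Set.ncard_pair hadj.ne] at hcard
  have hcard' : (2 : ℝ) ≤ ((nonIsolated G (box z L)).ncard : ℝ) := by exact_mod_cast hcard
  have := card_nonIsolated_le hF
  linarith

/-- A box satisfying both seed events has at most one large component. -/
lemma large_comp_unique {d L : ℕ} (hd : 0 < d) {mv : ℝ} {z : V d}
    {G : Set (Sym2 (V d))} (hE : G ∈ eventE d L mv z) (hF : G ∈ eventF d L mv z)
    {v w : V d} (hv : v ∈ box z L) (hw : w ∈ box z L)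
    (hv' : (3 / 4 : ℝ) * mv * (L : ℝ) ^ d ≤ (Nat.card ↥(comp G (box z L) v) : ℝ))
    (hw' : (3 / 4 : ℝ) * mv * (L : ℝ) ^ d ≤ (Nat.card ↥(comp G (box z L) w) : ℝ)) :
    comp G (box z L) v = comp G (box z L) w := by
  by_contra hne
  have hL : 2 ≤ L := by
    by_contra! hL
    refine hne (congrArg _ (funext fun i => ?_))
    have h1 := hv i
    have h2 := hw i
    omega
  have hthr := one_lt_threshold hd hL hE hF
  rw [Nat.card_coe_set_eq] at hv' hw'
  have hvN := comp_subset_nonIsolated (by exact_mod_cast hthr.trans_le hv')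
  have hwN := comp_subset_nonIsolated (by exact_mod_cast hthr.trans_le hw')
  have hfin := finite_box z L
  have hdisj : Disjoint (comp G (box z L) v) (comp G (box z L) w) :=
    Set.disjoint_left.2 fun a ha hb => hne (comp_eq_of_mem ha hb)
  have hunion := Set.ncard_union_eq hdisj (hfin.subset (comp_subset hv))
    (hfin.subset (comp_subset hw))
  have hle := Set.ncard_le_ncard (Set.union_subset hvN hwN) (hfin.subset fun _ h => h.1)
  rw [hunion] at hle
  have hle' : ((comp G (box z L) v).ncard : ℝ) + ((comp G (box z L) w).ncard : ℝ) ≤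
      ((nonIsolated G (box z L)).ncard : ℝ) := by exact_mod_cast hle
  have := card_nonIsolated_le hF
  linarith

lemma edgesIn_inter_eq {d L : ℕ} {GI GB : Set (Sym2 (V d))} {z : V d} {B : Set (V d)}
    (hGI : ∀ x y : V d, s(x, y) ∈ GI → adj x y) (hD : GB ∉ eventDbar d L z)
    (hB : B ⊆ box z (2 * L)) : edgesIn (GI ∩ GB) B = edgesIn GI B := by
  refine Set.Subset.antisymm (fun e he => ⟨he.1.1, he.2⟩) fun e he => ⟨⟨he.1, ?_⟩, he.2⟩
  induction e with
  | h a b =>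
    by_contra hab
    exact hD ⟨a, b, hB (he.2 a (by simp)), hB (he.2 b (by simp)), hGI a b he.1, hab⟩

lemma comp_inter_eq {d L : ℕ} {GI GB : Set (Sym2 (V d))} {z : V d}
    (hGI : ∀ x y : V d, s(x, y) ∈ GI → adj x y) (hD : GB ∉ eventDbar d L z) (v : V d) :
    comp (GI ∩ GB) (box z L) v = comp GI (box z L) v := by
  unfold comp EConnOn
  rw [edgesIn_inter_eq hGI hD (box_mono z (by omega))]

/-- Neighbouring points of `L ℤ^d` differ by `L` in a single coordinate. -/
lemma box_eq_offsetBox_of_grid_neighbor {d L : ℕ} {x y : V d}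
    (hx : x ∈ grid (d := d) L) (hy : y ∈ grid (d := d) L)
    (hxy : (∑ i, (x i - y i).natAbs) = L) :
    (∃ e, box y L = offsetBox x e L) ∨ ∃ e, box x L = offsetBox y e L := by
  have hval : ∀ i, x i = y i ∨ (x i - y i).natAbs = L := fun i => by
    have hle : (x i - y i).natAbs ≤ L :=
      hxy ▸ Finset.single_le_sum (f := fun i => (x i - y i).natAbs)
        (fun _ _ => Nat.zero_le _) (Finset.mem_univ i)
    have hdvd : L ∣ (x i - y i).natAbs := Int.natCast_dvd.1 (dvd_sub (hx i) (hy i))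
    rcases Nat.eq_zero_or_pos (x i - y i).natAbs with h | h
    · left; omega
    · exact .inr (le_antisymm hle (Nat.le_of_dvd h hdvd))
  by_cases h0 : ∀ i, x i = y i
  · exact .inl ⟨fun _ => false, by rw [offsetBox_false, funext h0]⟩
  push Not at h0
  obtain ⟨i, hi⟩ := h0
  have hiL := (hval i).resolve_left hi
  have hother : ∀ j, j ≠ i → x j = y j := fun j hj => by
    have := Finset.sum_le_sum_of_subset (f := fun k => (x k - y k).natAbs)
      (Finset.subset_univ {i, j})
    rw [Finset.sum_pair hj.symm, hxy] at this
    omega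
  rcases lt_or_gt_of_ne hi with h | h
  · refine .inl ⟨fun j => decide (j = i), congrArg (box · L) (funext fun j => ?_)⟩
    by_cases hj : j = i
    · subst hj; simp; omega
    · simp [hj, hother j hj]
  · refine .inr ⟨fun j => decide (j = i), congrArg (box · L) (funext fun j => ?_)⟩
    by_cases hj : j = i
    · subst hj; simp; omega
    · simp [hj, hother j hj]

lemma goodVert.reachable_offset {d L : ℕ} {mv : ℝ} {GI GB : Set (Sym2 (V d))} {x : V d}
    (hGI : ∀ x y : V d, s(x, y) ∈ GI → adj x y) (hgx : goodVert d L mv GI GB x)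
    {e : Fin d → Bool} {v w : V d} (hv : v ∈ box x L) (hw : w ∈ offsetBox x e L)
    (hv' : (3 / 4 : ℝ) * mv * (L : ℝ) ^ d ≤ (Nat.card ↥(comp GI (box x L) v) : ℝ))
    (hw' : (3 / 4 : ℝ) * mv * (L : ℝ) ^ d ≤ (Nat.card ↥(comp GI (offsetBox x e L) w) : ℝ))
    {B : Set (V d)} (hB : box x (2 * L) ⊆ B) :
    (latticeGraph (edgesIn (GI ∩ GB) B)).Reachable v w := by
  have h := hgx.1.2 (fun _ => false) e v w
  simp only [offsetBox_false] at h
  have hconn := h hv hw hv' hw'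
  unfold EConnOn at hconn
  rw [econn_iff_reachable, ← edgesIn_inter_eq hGI hgx.2.2 subset_rfl] at hconn
  exact hconn.mono (latticeGraph_mono (edgesIn_mono _ hB))

/-- Large components of neighbouring good blocks are connected. -/
lemma goodVert.reachable_neighbor {d L : ℕ} {mv : ℝ} {GI GB : Set (Sym2 (V d))} {x y : V d}
    (hGI : ∀ x y : V d, s(x, y) ∈ GI → adj x y)
    (hx : x ∈ grid (d := d) L) (hy : y ∈ grid (d := d) L)
    (hxy : (∑ i, (x i - y i).natAbs) = L)
    (hgx : goodVert d L mv GI GB x) (hgy : goodVert d L mv GI GB y)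
    {v w : V d} (hv : v ∈ box x L) (hw : w ∈ box y L)
    (hv' : (3 / 4 : ℝ) * mv * (L : ℝ) ^ d ≤ (Nat.card ↥(comp GI (box x L) v) : ℝ))
    (hw' : (3 / 4 : ℝ) * mv * (L : ℝ) ^ d ≤ (Nat.card ↥(comp GI (box y L) w) : ℝ)) :
    (latticeGraph (edgesIn (GI ∩ GB) (box x (2 * L) ∪ box y (2 * L)))).Reachable v w := by
  rcases box_eq_offsetBox_of_grid_neighbor hx hy hxy with ⟨e, he⟩ | ⟨e, he⟩
  · rw [he] at hw hw'
    exact hgx.reachable_offset hGI hv hw hv' hw' Set.subset_union_left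
  · rw [he] at hv hv'
    exact (hgy.reachable_offset hGI hw hv hw' hv' Set.subset_union_right).symm

lemma goodVert.exists_large {d L : ℕ} {mv : ℝ} {GI GB : Set (Sym2 (V d))} {x : V d}
    (hgx : goodVert d L mv GI GB x) : ∃ v ∈ box x L,
      (3 / 4 : ℝ) * mv * (L : ℝ) ^ d ≤ (Nat.card ↥(comp GI (box x L) v) : ℝ) := by
  have := hgx.1.1 fun _ => false
  rwa [offsetBox_false] at this

lemma grid_eq_of_mem_box {d L : ℕ} {x y v : V d} (hx : x ∈ grid (d := d) L)
    (hy : y ∈ grid (d := d) L) (hvx : v ∈ box x L) (hvy : v ∈ box y L) : x = y := by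
  funext i
  have h1 := hvx i
  have h2 := hvy i
  have h := Int.eq_zero_of_abs_lt_dvd (dvd_sub (hx i) (hy i)) (abs_lt.2 ⟨by omega, by omega⟩)
  omega

/-- Kőnig's lemma: in a locally finite graph every vertex with infinite connected component
is the starting point of an infinite self-avoiding path. -/
lemma exists_injective_ray {W : Type*} {G : SimpleGraph W}
    (hfin : ∀ x, (G.neighborSet x).Finite) {r : W} (hinf : {y | G.Reachable r y}.Infinite) :
    ∃ q : ℕ → W, Function.Injective q ∧ ∀ n, G.Adj (q n) (q (n + 1)) := by
  let D : W → Set W := fun x => {y | G.Reachable x y ∧ G.dist r y = G.dist r x + G.dist x y}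
  have step : ∀ x : {x // G.Reachable r x ∧ (D x).Infinite},
      ∃ x' : {x // G.Reachable r x ∧ (D x).Infinite},
        G.Adj x x' ∧ G.dist r x' = G.dist r x + 1 := by
    rintro ⟨x, hrx, hx⟩
    have hcover : D x \ {x} ⊆
        ⋃ a ∈ {a ∈ G.neighborSet x | G.dist r a = G.dist r x + 1}, D a := by
      rintro y ⟨⟨hxy, hy⟩, hne⟩
      obtain ⟨p, hp⟩ := hxy.exists_walk_length_eq_dist
      cases p with
      | nil => exact absurd rfl hne
      | @cons _ a _ hadj p =>
        rw [SimpleGraph.Walk.length_cons] at hp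
        have h1 := SimpleGraph.dist_le p
        have h2 := (hrx.trans hadj.reachable).dist_triangle_left y
        have h3 := hrx.dist_triangle_left a
        rw [SimpleGraph.dist_eq_one_iff_adj.2 hadj] at h3
        refine Set.mem_biUnion (x := a) ⟨hadj, by omega⟩ ⟨⟨p⟩, by omega⟩
    have hinf' := (hx.sdiff (Set.finite_singleton x)).mono hcover
    obtain ⟨a, ⟨hadj, hdist⟩, ha⟩ : ∃ a ∈ {a ∈ G.neighborSet x | G.dist r a = G.dist r x + 1},
        (D a).Infinite := by
      by_contra! h
      exact hinf' (((hfin x).subset fun _ h => h.1).biUnion h)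
    exact ⟨⟨a, hrx.trans (SimpleGraph.Adj.reachable hadj), ha⟩, hadj, hdist⟩
  choose f hf using step
  let q : ℕ → {x // G.Reachable r x ∧ (D x).Infinite} := fun n =>
    f^[n] ⟨r, .refl _, hinf.mono fun y hy => ⟨hy, by simp⟩⟩
  have hq : ∀ n, q (n + 1) = f (q n) := fun n => Function.iterate_succ_apply' f n _
  have hdist : ∀ n, G.dist r (q n) = n := fun n => by
    induction n with
    | zero => exact SimpleGraph.dist_self
    | succ n ih => rw [hq, (hf _).2, ih]
  refine ⟨fun n => q n, fun m n hmn => ?_, fun n => ?_⟩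
  · rw [← hdist m, ← hdist n]
    exact congrArg _ hmn
  · simp only [hq]
    exact (hf _).1

/-- **Lemma (good neighbouring blocks are well connected).** Let `x, y` be
nearest-neighbours in `G₀ = L₀ℤ^d` (both in `L₀ℤ^d` with `|x - y|₁ = L₀`) and assume both
are good for the configurations `(GI, GB)` (interlacement graph, Bernoulli bonds).  Then
(a) each graph `(GI ∩ GB) ∩ (z + [0,L₀)^d)`, `z ∈ {x,y}`, has a unique connected
component with at least `(3/4) m(u) L₀^d` vertices, (b) these two components are
connected within `(GI ∩ GB) ∩ ((x+[0,2L₀)^d) ∪ (y+[0,2L₀)^d))`, and consequently every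
infinite nearest-neighbour path of good vertices of `G₀` yields an infinite
nearest-neighbour path of `GI ∩ GB` inside the union of the corresponding blocks. -/
theorem good_blocks_connect (d : ℕ) (hd : 3 ≤ d) (u : ℝ) (hu : 0 < u)
    (L0 : ℕ) (hL0 : 1 ≤ L0) (GI GB : Set (Sym2 (V d)))
    (hGI : ∀ x y : V d, s(x, y) ∈ GI → adj x y)
    (x y : V d) (hx : x ∈ grid (d := d) L0) (hy : y ∈ grid (d := d) L0)
    (hxy : (∑ i, (x i - y i).natAbs) = L0)
    (hgx : goodVert d L0 (density d u) GI GB x)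
    (hgy : goodVert d L0 (density d u) GI GB y) :
    (∀ z ∈ ({x, y} : Set (V d)), ∃! Cz : Set (V d),
        (∃ v ∈ box z L0, Cz = comp (GI ∩ GB) (box z L0) v) ∧
        (3 / 4 : ℝ) * density d u * (L0 : ℝ) ^ d ≤ (Nat.card ↥Cz : ℝ)) ∧
    (∀ v w : V d, v ∈ box x L0 → w ∈ box y L0 →
        (3 / 4 : ℝ) * density d u * (L0 : ℝ) ^ d ≤
          (Nat.card ↥(comp (GI ∩ GB) (box x L0) v) : ℝ) →
        (3 / 4 : ℝ) * density d u * (L0 : ℝ) ^ d ≤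
          (Nat.card ↥(comp (GI ∩ GB) (box y L0) w) : ℝ) →
        EConnOn (GI ∩ GB) (box x (2 * L0) ∪ box y (2 * L0)) v w) ∧
    (∀ π : ℕ → V d, Function.Injective π →
        (∀ i : ℕ, π i ∈ grid (d := d) L0 ∧ goodVert d L0 (density d u) GI GB (π i)) →
        (∀ i : ℕ, (∑ j, (π i j - π (i + 1) j).natAbs) = L0) →
        ∃ q : ℕ → V d, Function.Injective q ∧
          (∀ i : ℕ, q i ∈ ⋃ j : ℕ, box (π j) (2 * L0)) ∧
          ∀ i : ℕ, adj (q i) (q (i + 1)) ∧ s(q i, q (i + 1)) ∈ GI ∩ GB) := by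
  have hcomp : ∀ z : V d, goodVert d L0 (density d u) GI GB z → ∀ v,
      comp (GI ∩ GB) (box z L0) v = comp GI (box z L0) v :=
    fun z hz v => comp_inter_eq hGI hz.2.2 v
  refine ⟨fun z hz => ?_, fun v w hv hw hv' hw' => ?_, fun π hinj hπ hstep => ?_⟩
  · have hgz : goodVert d L0 (density d u) GI GB z := by
      rcases hz with rfl | rfl
      exacts [hgx, hgy]
    obtain ⟨v, hv, hv'⟩ := hgz.exists_large
    refine ⟨comp GI (box z L0) v, ⟨⟨v, hv, (hcomp z hgz v).symm⟩, hv'⟩, ?_⟩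
    rintro _ ⟨⟨w, hw, rfl⟩, hw'⟩
    rw [hcomp z hgz] at hw' ⊢
    exact large_comp_unique (by omega) hgz.1 hgz.2.1 hw hv hw' hv'
  · rw [hcomp x hgx] at hv'
    rw [hcomp y hgy] at hw'
    exact econn_iff_reachable.2 (hgx.reachable_neighbor hGI hx hy hxy hgy hv hw hv' hw')
  · choose v hv hv' using fun i => (hπ i).2.exists_large
    have hreach : ∀ i, (latticeGraph
        (edgesIn (GI ∩ GB) (⋃ j, box (π j) (2 * L0)))).Reachable (v 0) (v i) := fun i => by
      induction i with
      | zero => exact .refl _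
      | succ i ih =>
        refine ih.trans (((hπ i).2.reachable_neighbor hGI (hπ i).1 (hπ (i + 1)).1 (hstep i)
          (hπ (i + 1)).2 (hv i) (hv (i + 1)) (hv' i) (hv' (i + 1))).mono
          (latticeGraph_mono (edgesIn_mono _ (Set.union_subset ?_ ?_))))
        · exact Set.subset_iUnion (fun j => box (π j) (2 * L0)) i
        · exact Set.subset_iUnion (fun j => box (π j) (2 * L0)) (i + 1)
    have hvinj : Function.Injective v := fun i j hij =>
      hinj (grid_eq_of_mem_box (hπ i).1 (hπ j).1 (hv i) (hij ▸ hv j))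
    obtain ⟨q, hq, hadj⟩ := exists_injective_ray
      (G := latticeGraph (edgesIn (GI ∩ GB) (⋃ j, box (π j) (2 * L0))))
      (fun x => (finite_setOf_adj x).subset fun _ h => h.1)
      ((Set.infinite_range_of_injective hvinj).mono (Set.range_subset_iff.2 hreach))
    exact ⟨q, hq, fun i => (mem_of_edgesIn_adj (hadj i)).1,
      fun i => ⟨(hadj i).1, (hadj i).2.1⟩⟩

end RIQ
end

section
/- Let R ≥ 1 with εR ≥ 10 and k = ⌊εR/10⌋. Suppose that for every z ∈ [0,R)^d the following two conditions hold: (a) B(z,k) is connected to the boundary of B(z,4k) by a nearest-neighbor path in V^u, and (b) every two nearest-neighbor paths from B(z,2k) to the boundary of B(z,3k) in V^u lie in the same connected component of V^u ∩ B(z,6k). Then every pair of vertices x, y ∈ V^u_{εR} ∩ [0,R)^d is connected by a path in V^u ∩ [−εR, (1+ε)R)^d. -/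
open MeasureTheory
open scoped ENNReal

namespace RIQ

/-- `V^u_k` (for the set of sites `S`): the vertices of `S` lying in connected components
of `S` of `ℓ^∞`-diameter at least `k`. -/
def Vk {d : ℕ} (S : Set (V d)) (k : ℝ) : Set (V d) :=
  {x | x ∈ S ∧ ∃ a b : V d, SConn S x a ∧ SConn S x b ∧ k ≤ (normInf (a - b) : ℝ)}

/-- The box `[0, R)^d`. -/
def box0 (d R : ℕ) : Set (V d) := {x | ∀ i, 0 ≤ x i ∧ x i < (R : ℤ)}

/-- The box `[-εR, (1+ε)R)^d`. -/
def bigBox (d : ℕ) (ε : ℝ) (R : ℕ) : Set (V d) :=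
  {x | ∀ i, -(ε * (R : ℝ)) ≤ (x i : ℝ) ∧ (x i : ℝ) < (1 + ε) * (R : ℝ)}

theorem normInf_le_iff {d : ℕ} {x : V d} {r : ℕ} :
    normInf x ≤ r ↔ ∀ i, (x i).natAbs ≤ r := by
  simp [normInf, Finset.sup_le_iff]

theorem natAbs_le_normInf {d : ℕ} (x : V d) (i : Fin d) : (x i).natAbs ≤ normInf x :=
  normInf_le_iff.1 le_rfl i

theorem normInf_sub_le {d : ℕ} (x y z : V d) :
    normInf (x - z) ≤ normInf (x - y) + normInf (y - z) := by
  rw [normInf_le_iff]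
  intro i
  have h₁ := natAbs_le_normInf (x - y) i
  have h₂ := natAbs_le_normInf (y - z) i
  simp only [Pi.sub_apply] at *
  omega

theorem normInf_sub_comm {d : ℕ} (x y : V d) : normInf (x - y) = normInf (y - x) := by
  rw [← neg_sub y x]
  simp only [normInf, Pi.neg_apply, Int.natAbs_neg]

theorem adj.symm {d : ℕ} {x y : V d} (h : adj x y) : adj y x := by
  rw [adj, ← h]
  exact Finset.sum_congr rfl fun i _ => by rw [← neg_sub, Int.natAbs_neg]

theorem adj.normInf_sub_le_one {d : ℕ} {x y : V d} (h : adj x y) : normInf (x - y) ≤ 1 := by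
  rw [normInf_le_iff]
  intro i
  refine le_of_le_of_eq ?_ h
  exact Finset.single_le_sum (f := fun i => (x i - y i).natAbs) (fun _ _ => Nat.zero_le _)
    (Finset.mem_univ i)

theorem SConn.symm {d : ℕ} {S : Set (V d)} {x y : V d} (h : SConn S x y) : SConn S y x := by
  obtain ⟨n, p, h0, hn, hS, hadj⟩ := h
  refine ⟨n, fun i => p (n - i), by simpa using hn, by simpa using h0,
    fun i _ => hS _ (Nat.sub_le n i), fun i hi => ?_⟩
  have h := (hadj (n - (i + 1)) (by omega)).symm
  rwa [show n - (i + 1) + 1 = n - i by omega] at h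

theorem SConn.trans {d : ℕ} {S : Set (V d)} {x y z : V d} (hxy : SConn S x y)
    (hyz : SConn S y z) : SConn S x z := by
  obtain ⟨n, p, hp0, hpn, hpS, hpadj⟩ := hxy
  obtain ⟨m, q, hq0, hqm, hqS, hqadj⟩ := hyz
  refine ⟨n + m, fun i => if i < n then p i else q (i - n), ?_, ?_, ?_, ?_⟩
  · rcases Nat.eq_zero_or_pos n with rfl | hn
    · simp [hq0, ← hpn, hp0]
    · simp [hn, hp0]
  · simp [hqm]
  · intro i hi
    dsimp only
    split_ifs with h
    · exact hpS i h.le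
    · exact hqS _ (by omega)
  · intro i hi
    dsimp only
    split_ifs with h h' h'
    · exact hpadj i h
    · have h := hpadj i h
      rwa [show i + 1 = n by omega, hpn, ← hq0, ← Nat.sub_self n,
        show n - n = i + 1 - n by omega] at h
    · omega
    · rw [show i + 1 - n = i - n + 1 by omega]
      exact hqadj _ (by omega)

theorem SConn.mono {d : ℕ} {S T : Set (V d)} (hST : S ⊆ T) {x y : V d} (h : SConn S x y) :
    SConn T x y := by
  obtain ⟨n, p, h0, hn, hS, hadj⟩ := h
  exact ⟨n, p, h0, hn, fun i hi => hST (hS i hi), hadj⟩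

/-- A path leaving an `ℓ^∞` ball, stopped when it first reaches the boundary of the ball. -/
theorem SConn.exists_boundary {d : ℕ} {S : Set (V d)} {x y z : V d} {r : ℕ}
    (h : SConn S x y) (hx : normInf (x - z) ≤ r) (hy : r ≤ normInf (y - z)) :
    ∃ b, normInf (b - z) = r ∧ SConn (S ∩ ballInf z r) x b := by
  classical
  obtain ⟨n, p, rfl, rfl, hS, hadj⟩ := h
  have hex : ∃ m, r ≤ normInf (p m - z) := ⟨n, hy⟩
  have hmn : Nat.find hex ≤ n := Nat.find_min' hex hy
  have hlt : ∀ i < Nat.find hex, normInf (p i - z) < r := fun i hi =>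
    not_le.1 (Nat.find_min hex hi)
  have hle : normInf (p (Nat.find hex) - z) ≤ r := by
    rcases hm : Nat.find hex with _ | m
    · exact hx
    · have h₁ := hlt m (by omega)
      have h₂ := (hadj m (by omega)).symm.normInf_sub_le_one
      have h₃ := normInf_sub_le (p (m + 1)) (p m) z
      omega
  refine ⟨p (Nat.find hex), le_antisymm hle (Nat.find_spec hex), Nat.find hex, p, rfl, rfl,
    fun i hi => ⟨hS i (hi.trans hmn), ?_⟩, fun i hi => hadj i (hi.trans_le hmn)⟩
  rcases hi.lt_or_eq with hi | rfl
  · exact (hlt i hi).le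
  · exact hle

/-- The diagonal step from `z` towards `y` stays in the box and decreases the distance. -/
theorem exists_box0_step {d R n : ℕ} {y z : V d} (hy : y ∈ box0 d R) (hz : z ∈ box0 d R)
    (h : normInf (y - z) ≤ n + 1) :
    ∃ w ∈ box0 d R, normInf (w - z) ≤ 1 ∧ normInf (y - w) ≤ n := by
  rw [normInf_le_iff] at h
  refine ⟨fun i => if z i < y i then z i + 1 else if y i < z i then z i - 1 else z i,
    fun i => ?_, normInf_le_iff.2 fun i => ?_, normInf_le_iff.2 fun i => ?_⟩ <;>
  · have h₁ := hy i
    have h₂ := hz i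
    have h₃ := h i
    simp only [Pi.sub_apply] at *
    split_ifs <;> omega

theorem ballInf_subset_bigBox {d R r : ℕ} {ε : ℝ} {z : V d} (hz : z ∈ box0 d R)
    (hr : (r : ℝ) ≤ ε * R) : ballInf z r ⊆ bigBox d ε R := by
  intro w hw i
  have h₁ := normInf_le_iff.1 hw i
  have h₂ := hz i
  simp only [Pi.sub_apply] at h₁
  have h₃ : -(r : ℤ) ≤ w i := by omega
  have h₄ : w i < R + r := by omega
  have h₃' : -(r : ℝ) ≤ w i := by exact_mod_cast h₃
  have h₄' : (w i : ℝ) < R + r := by exact_mod_cast h₄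
  constructor <;> linarith

/-- **Deterministic connectivity lemma.** Let `R ≥ 1` with `εR ≥ 10` and
`k = ⌊εR/10⌋`.  Suppose for every `z ∈ [0,R)^d`:
(a) `B(z,k)` is connected to the boundary of `B(z,4k)` by a nearest-neighbour path in
`S`, and (b) every two nearest-neighbour paths in `S` from `B(z,2k)` to the boundary of
`B(z,3k)` lie in the same connected component of `S ∩ B(z,6k)`.  Then every pair of
vertices of `V^u_{εR} ∩ [0,R)^d` (computed for `S`) is connected within
`S ∩ [-εR,(1+ε)R)^d`. -/
theorem vacant_connectivity_deterministic (d : ℕ) (hd : 3 ≤ d) (S : Set (V d))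
    (ε : ℝ) (hε : 0 < ε) (R : ℕ) (hR : 1 ≤ R) (hεR : 10 ≤ ε * (R : ℝ))
    (k : ℕ) (hk : k = ⌊ε * (R : ℝ) / 10⌋₊)
    (ha : ∀ z : V d, z ∈ box0 d R → ∃ a b : V d,
        normInf (a - z) ≤ k ∧ normInf (b - z) = 4 * k ∧
        SConn (S ∩ ballInf z (4 * k)) a b)
    (hb : ∀ z : V d, z ∈ box0 d R → ∀ a₁ b₁ a₂ b₂ : V d,
        normInf (a₁ - z) ≤ 2 * k → normInf (b₁ - z) = 3 * k →
        SConn (S ∩ ballInf z (3 * k)) a₁ b₁ →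
        normInf (a₂ - z) ≤ 2 * k → normInf (b₂ - z) = 3 * k →
        SConn (S ∩ ballInf z (3 * k)) a₂ b₂ →
        SConn (S ∩ ballInf z (6 * k)) a₁ a₂) :
    ∀ x y : V d, x ∈ Vk S (ε * R) → y ∈ Vk S (ε * R) →
      x ∈ box0 d R → y ∈ box0 d R → SConn (S ∩ bigBox d ε R) x y := by
  have hk_le : (k : ℝ) ≤ ε * R / 10 := hk ▸ Nat.floor_le (by positivity)
  have hk_pos : 1 ≤ k := hk ▸ Nat.le_floor (by norm_num; linarith)
  have hball : ∀ z ∈ box0 d R, S ∩ ballInf z (6 * k) ⊆ S ∩ bigBox d ε R := fun z hz =>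
    Set.inter_subset_inter_right S (ballInf_subset_bigBox hz (by push_cast; linarith))
  have hconn : ∀ z ∈ box0 d R, ∀ a₁ b₁ a₂ b₂ : V d,
      SConn S a₁ b₁ → normInf (a₁ - z) ≤ 2 * k → 3 * k ≤ normInf (b₁ - z) →
      SConn S a₂ b₂ → normInf (a₂ - z) ≤ 2 * k → 3 * k ≤ normInf (b₂ - z) →
      SConn (S ∩ bigBox d ε R) a₁ a₂ := by
    intro z hz a₁ b₁ a₂ b₂ h₁ ha₁ hb₁ h₂ ha₂ hb₂
    obtain ⟨c₁, hc₁, h₁⟩ := h₁.exists_boundary (by omega) hb₁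
    obtain ⟨c₂, hc₂, h₂⟩ := h₂.exists_boundary (by omega) hb₂
    exact (hb z hz a₁ c₁ a₂ c₂ ha₁ hc₁ h₁ ha₂ hc₂ h₂).mono (hball z hz)
  choose! a b haz hbz hab using ha
  have habS : ∀ z ∈ box0 d R, SConn S (a z) (b z) := fun z hz =>
    (hab z hz).mono Set.inter_subset_left
  have hchain : ∀ n, ∀ y ∈ box0 d R, ∀ z ∈ box0 d R, normInf (y - z) ≤ n →
      SConn (S ∩ bigBox d ε R) (a z) (a y) := by
    intro n y hy
    induction n with
    | zero =>
      intro z hz h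
      have hyz : y = z := by
        ext i
        have h := normInf_le_iff.1 h i
        simp only [Pi.sub_apply] at h
        omega
      subst hyz
      have h₁ := haz y hz
      have h₂ := hbz y hz
      exact hconn y hz _ _ _ _ (habS y hz) (by omega) (by omega) (habS y hz) (by omega) (by omega)
    | succ n ih =>
      intro z hz h
      obtain ⟨w, hw, hwz, hyw⟩ := exists_box0_step hy hz h
      refine SConn.trans ?_ (ih w hw hyw)
      have h₁ := haz z hz
      have h₂ := hbz z hz
      have h₃ := haz w hw
      have h₄ := hbz w hw
      have h₅ := normInf_sub_le (a w) w z
      have h₆ := normInf_sub_le (b w) z w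
      have h₇ := normInf_sub_comm w z
      exact hconn z hz _ _ _ _ (habS z hz) (by omega) (by omega) (habS w hw) (by omega) (by omega)
  have hstart : ∀ x ∈ Vk S (ε * R), x ∈ box0 d R → SConn (S ∩ bigBox d ε R) x (a x) := by
    rintro x ⟨-, p, q, hp, hq, hpq⟩ hx
    have hfar : 10 * k ≤ normInf (p - q) := by
      have h : (10 * k : ℝ) ≤ normInf (p - q) := by linarith
      exact_mod_cast h
    have h₁ := haz x hx
    have h₂ := hbz x hx
    have h₃ := normInf_sub_le p x q
    have h₄ := normInf_sub_comm x q
    have h₅ : normInf (x - x) = 0 := by simp [normInf]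
    rcases le_total (3 * k) (normInf (p - x)) with h | h
    · exact hconn x hx _ _ _ _ hp (by omega) h (habS x hx) (by omega) (by omega)
    · exact hconn x hx _ _ _ _ hq (by omega) (by omega) (habS x hx) (by omega) (by omega)
  intro x y hxV hyV hx hy
  exact (hstart x hxV hx).trans ((hchain _ y hy x hx le_rfl).trans (hstart y hyV hy).symm)

end RIQ
end
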